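/- Let A be a unital associative algebra over ℂ, let L : A → A be a Lie derivation, and let z₀ ∈ A be a central idempotent such that z₀·x ∈ Z(A) for every x ∈ A; set z₁ = 1 − z₀. Then each of the ℂ-linear maps F₁(x) = z₀·L(z₁·x), F₂(x) = z₁·L(z₀·x), and F₃(x) = z₀·L(z₀·x) is a center-valued trace on A: for i = 1, 2, 3 and all x, y ∈ A one has Fᵢ(x) ∈ Z(A) and Fᵢ(x*y) = Fᵢ(y*x). -/

import Mathlib

/-- Lemma 10 (ii) of the paper: if `L` is a Lie derivation on a unital
associative complex algebra `A` and `z₀` is a central idempotent such that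
`z₀·x` is central for every `x`, then with `z₁ = 1 − z₀`, the maps
`F₁(x) = z₀·L(z₁·x)`, `F₂(x) = z₁·L(z₀·x)` and `F₃(x) = z₀·L(z₀·x)` are
center-valued traces on `A`. -/
theorem corner_maps_are_center_valued_traces
    {A : Type*} [Ring A] [Algebra ℂ A]
    (L : A →ₗ[ℂ] A)
    (hL : ∀ x y : A, L (x * y - y * x) =
      (L x * y - y * L x) + (x * L y - L y * x))
    (z₀ : A) (hz₀ : ∀ a : A, z₀ * a = a * z₀) (hz₀z₀ : z₀ * z₀ = z₀)
    (hcomm : ∀ x : A, ∀ a : A, (z₀ * x) * a = a * (z₀ * x)) :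
    ((∀ x : A, ∀ a : A, (z₀ * L ((1 - z₀) * x)) * a = a * (z₀ * L ((1 - z₀) * x))) ∧
      (∀ x y : A, z₀ * L ((1 - z₀) * (x * y)) = z₀ * L ((1 - z₀) * (y * x)))) ∧
    ((∀ x : A, ∀ a : A, ((1 - z₀) * L (z₀ * x)) * a = a * ((1 - z₀) * L (z₀ * x))) ∧
      (∀ x y : A, (1 - z₀) * L (z₀ * (x * y)) = (1 - z₀) * L (z₀ * (y * x)))) ∧
    ((∀ x : A, ∀ a : A, (z₀ * L (z₀ * x)) * a = a * (z₀ * L (z₀ * x))) ∧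
      (∀ x y : A, z₀ * L (z₀ * (x * y)) = z₀ * L (z₀ * (y * x)))) := by
  have hsym : ∀ x y : A, z₀ * (x * y) = z₀ * (y * x) := by
    intro x y
    rw [← mul_assoc, hcomm x y, ← mul_assoc, ← hz₀ y, mul_assoc]
  have hcen : ∀ x a : A, L (z₀ * x) * a = a * L (z₀ * x) := by
    intro x a
    have h := hL (z₀ * x) a
    rw [hcomm x a, sub_self, map_zero, hcomm x (L a), sub_self, add_zero] at h
    exact (sub_eq_zero.mp h.symm)
  refine ⟨⟨fun x a => hcomm _ a, fun x y => ?_⟩, ⟨fun x a => ?_, fun x y => by rw [hsym x y]⟩,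
    ⟨fun x a => hcomm _ a, fun x y => by rw [hsym x y]⟩⟩
  · rw [← sub_eq_zero, ← mul_sub, ← map_sub]
    have h : (1 - z₀) * (x * y) - (1 - z₀) * (y * x) = x * y - y * x := by
      rw [sub_mul, sub_mul, hsym x y, one_mul, one_mul]
      abel
    rw [h, hL, mul_add, mul_sub, mul_sub, hsym (L x) y, hsym x (L y), sub_self, sub_self, add_zero]
  · rw [mul_assoc, hcen x a, ← mul_assoc, ← mul_assoc, sub_mul, mul_sub, hz₀ a, one_mul, mul_one]
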